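/- arXiv:2602.02992 — 2 statements merged into one kernel-verified Lean document; each statement's English description precedes it below -/
import Mathlib

section
/- Let q, r ≥ 1 and let M, N ∈ ℝ^{(q+r)×(q+r)} be symmetric, partitioned as M = [[M₁₁, M₁₂],[M₁₂^⊤, M₂₂]] and N = [[N₁₁, N₁₂],[N₁₂^⊤, N₂₂]] where the (1,1)-blocks are q×q and the (2,2)-blocks are r×r. Assume N₂₂ is negative definite, ker N₂₂ ⊆ ker N₁₂, and N₁₁ − N₁₂ N₂₂^{−1} N₁₂^⊤ is positive semidefinite. Then the inclusion { Z ∈ ℝ^{r×q} : [I_q; Z]^⊤ N [I_q; Z] is positive semidefinite } ⊆ { Z ∈ ℝ^{r×q} : [I_q; Z]^⊤ M [I_q; Z] is positive definite } holds if and only if there exists a scalar α ≥ 0 such that M − αN is positive definite. -/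
open Matrix

/-- The `(q+r) × q` matrix `[I_q; Z]` obtained by stacking `I_q` on top of `Z`. -/
def stackIZ {q r : ℕ} (Z : Matrix (Fin r) (Fin q) ℝ) :
    Matrix (Fin q ⊕ Fin r) (Fin q) ℝ :=
  Matrix.of (Sum.elim (fun a j => if a = j then (1 : ℝ) else 0) (fun b j => Z b j))

/-- The quadratic form of a matrix. -/
def qfm {ι : Type*} [Fintype ι] (A : Matrix ι ι ℝ) (v : ι → ℝ) : ℝ := v ⬝ᵥ (A *ᵥ v)

lemma qfm_comb {ι : Type*} [Fintype ι] {A : Matrix ι ι ℝ} (hA : A.IsSymm) (a b : ℝ)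
    (u v : ι → ℝ) :
    qfm A (a • u + b • v) = a ^ 2 * qfm A u + 2 * a * b * (u ⬝ᵥ (A *ᵥ v)) + b ^ 2 * qfm A v := by
  have h : v ⬝ᵥ (A *ᵥ u) = u ⬝ᵥ (A *ᵥ v) := by
    rw [dotProduct_mulVec, ← mulVec_transpose, hA.eq, dotProduct_comm]
  simp only [qfm, mulVec_add, mulVec_smul, dotProduct_add, add_dotProduct, smul_dotProduct,
    dotProduct_smul, smul_eq_mul, h]
  ring

lemma qfm_smul {ι : Type*} [Fintype ι] (A : Matrix ι ι ℝ) (a : ℝ) (u : ι → ℝ) :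
    qfm A (a • u) = a ^ 2 * qfm A u := by
  simp only [qfm, mulVec_smul, smul_dotProduct, dotProduct_smul, smul_eq_mul]
  ring

lemma qfm_continuous {ι : Type*} [Fintype ι] (A : Matrix ι ι ℝ) : Continuous (qfm A) := by
  unfold qfm
  fun_prop

lemma closed_aux {V : Type*} [TopologicalSpace V] {K : Set V} (hK : IsCompact K)
    (f g : V → ℝ) (hf : Continuous f) (hg : Continuous g) :
    IsClosed {α : ℝ | ∃ v ∈ K, f v - α * g v ≤ 0} := by
  rw [← isOpen_compl_iff, isOpen_iff_mem_nhds]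
  intro α hα
  have hα' : ∀ v ∈ K, 0 < f v - α * g v := by
    intro v hv
    by_contra h
    exact hα ⟨v, hv, not_lt.mp h⟩
  have := hK.eventually_forall_of_forall_eventually (x₀ := α)
    (P := fun α v => 0 < f v - α * g v) (by
      intro v hv
      have hc : Continuous (fun z : ℝ × V => f z.2 - z.1 * g z.2) := by fun_prop
      exact hc.continuousAt.eventually (lt_mem_nhds (hα' v hv)))
  filter_upwards [this] with β hβ
  rintro ⟨v, hv, h⟩
  exact absurd (hβ v hv) (not_lt.mpr h)

lemma segment_aux {ι : Type*} [Fintype ι] {P N : Matrix ι ι ℝ} (hP : P.IsSymm) (hN : N.IsSymm)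
    (h : ∀ v, v ≠ 0 → 0 ≤ qfm N v → 0 < qfm P v) (α : ℝ) (u v : ι → ℝ)
    (hu : u ≠ 0) (hv : v ≠ 0) (hNu : 0 ≤ qfm N u) (hNv : qfm N v ≤ 0)
    (hPu : qfm P u - α * qfm N u ≤ 0) (hPv : qfm P v - α * qfm N v ≤ 0)
    (hb : u ⬝ᵥ (P *ᵥ v) - α * (u ⬝ᵥ (N *ᵥ v)) ≤ 0) : False := by
  have hc : ContinuousOn (fun t : ℝ => qfm N ((1 - t) • u + t • v)) (Set.Icc 0 1) := by
    apply Continuous.continuousOn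
    exact (qfm_continuous N).comp (by fun_prop)
  have h0 : (0 : ℝ) ∈ (fun t : ℝ => qfm N ((1 - t) • u + t • v)) '' Set.Icc 0 1 := by
    apply intermediate_value_Icc' zero_le_one hc
    simp [hNu, hNv]
  obtain ⟨t, ⟨ht0, ht1⟩, ht⟩ := h0
  simp only at ht
  have hQ : qfm P ((1 - t) • u + t • v) - α * qfm N ((1 - t) • u + t • v) ≤ 0 := by
    rw [qfm_comb hP, qfm_comb hN]
    have h1 : 0 ≤ 1 - t := by linarith
    have e1 := mul_nonpos_of_nonneg_of_nonpos (sq_nonneg (1 - t)) hPu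
    have e2 := mul_nonpos_of_nonneg_of_nonpos (sq_nonneg t) hPv
    have e3 := mul_nonpos_of_nonneg_of_nonpos (mul_nonneg h1 ht0) hb
    nlinarith
  by_cases hw : (1 - t) • u + t • v = 0
  · -- then `u` and `v` are proportional
    have hz : ((1 - t) • u) = (-t) • v := by
      rw [neg_smul]; exact eq_neg_of_add_eq_zero_left hw
    have e := congrArg (qfm N) hz
    rw [qfm_smul, qfm_smul] at e
    by_cases ht' : t = 1
    · subst ht'
      simp at hw
      exact hv hw
    · have h1 : 0 < (1 - t) ^ 2 := by
        have : 1 - t ≠ 0 := fun h => ht' (by linarith)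
        positivity
      have h2 : qfm N u = 0 := by
        have : (1 - t) ^ 2 * qfm N u ≤ 0 := by
          rw [e]; exact mul_nonpos_of_nonneg_of_nonpos (sq_nonneg _) hNv
        have := nonpos_of_mul_nonpos_right this h1
        linarith
      have := h u hu hNu
      rw [h2] at hPu
      linarith
  · have := h _ hw ht.ge
    rw [ht] at hQ
    linarith

/-- Strict S-lemma for quadratic forms, no Slater condition. -/
lemma strict_slemma {ι : Type*} [Fintype ι] {P N : Matrix ι ι ℝ}
    (hP : P.IsSymm) (hN : N.IsSymm)
    (h : ∀ v, v ≠ 0 → 0 ≤ qfm N v → 0 < qfm P v) :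
    ∃ α : ℝ, 0 ≤ α ∧ ∀ v, v ≠ 0 → 0 < qfm P v - α * qfm N v := by
  have cP := qfm_continuous P
  have cN := qfm_continuous N
  have hC : IsCompact (Metric.sphere (0 : ι → ℝ) 1) := isCompact_sphere 0 1
  have hne : ∀ v ∈ Metric.sphere (0 : ι → ℝ) 1, v ≠ 0 := by
    rintro v hv rfl
    simp at hv
  by_contra! hcon
  have hcov : ∀ α : ℝ, 0 ≤ α → ∃ v ∈ Metric.sphere (0 : ι → ℝ) 1,
      qfm P v - α * qfm N v ≤ 0 := by
    intro α hα
    obtain ⟨v, hv, hle⟩ := hcon α hα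
    refine ⟨‖v‖⁻¹ • v, ?_, ?_⟩
    · simp [norm_smul, hv]
    · rw [qfm_smul, qfm_smul]
      have := mul_nonpos_of_nonneg_of_nonpos (sq_nonneg ‖v‖⁻¹) hle
      linarith
  have hK1 : IsCompact (Metric.sphere (0 : ι → ℝ) 1 ∩ {v | 0 ≤ qfm N v}) :=
    hC.inter_right (isClosed_le continuous_const cN)
  have hK2 : IsCompact (Metric.sphere (0 : ι → ℝ) 1 ∩ {v | qfm N v ≤ 0}) :=
    hC.inter_right (isClosed_le cN continuous_const)
  have hlarge : ∃ α : ℝ, 0 ≤ α ∧ ∀ v ∈ Metric.sphere (0 : ι → ℝ) 1 ∩ {v | qfm N v ≤ 0},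
      qfm N v ≤ 0 → 0 < qfm P v - α * qfm N v := by
    refine hK2.induction_on
      (p := fun s => ∃ α : ℝ, 0 ≤ α ∧ ∀ v ∈ s, qfm N v ≤ 0 → 0 < qfm P v - α * qfm N v)
      ⟨0, le_rfl, by simp⟩ ?_ ?_ ?_
    · rintro s t hst ⟨α, hα, H⟩
      exact ⟨α, hα, fun v hv => H v (hst hv)⟩
    · rintro s t ⟨α, hα, H⟩ ⟨β, hβ, H'⟩
      refine ⟨α + β, by positivity, ?_⟩
      rintro v (hv | hv) hn
      · have := H v hv hn
        nlinarith
      · have := H' v hv hn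
        nlinarith
    · rintro v ⟨hv, hn⟩
      have : ∃ α : ℝ, 0 ≤ α ∧ 0 < qfm P v - α * qfm N v := by
        rcases eq_or_lt_of_le (show qfm N v ≤ 0 from hn) with h0 | h0
        · exact ⟨0, le_rfl, by have := h v (hne v hv) h0.ge; linarith⟩
        · refine ⟨(|qfm P v| + 1) / (-qfm N v), ?_, ?_⟩
          · have : 0 < -qfm N v := by linarith
            positivity
          · have e : (|qfm P v| + 1) / (-qfm N v) * qfm N v = -(|qfm P v| + 1) := by
              have := h0.ne
              field_simp
            rw [e]
            have := neg_abs_le (qfm P v)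
            linarith
      obtain ⟨α, hα, hpos⟩ := this
      refine ⟨{w | 0 < qfm P w - α * qfm N w}, ?_, α, hα, fun w hw _ => hw⟩
      apply mem_nhdsWithin_of_mem_nhds
      exact (isOpen_lt continuous_const (by fun_prop)).mem_nhds hpos
  have key := isPreconnected_closed_iff.mp (isPreconnected_Ici (a := (0 : ℝ))) _ _
    (closed_aux hK1 _ _ cP cN) (closed_aux hK2 _ _ cP cN) ?_ ?_ ?_
  · obtain ⟨α, -, ⟨u, ⟨hu, hNu⟩, hPu⟩, ⟨v, ⟨hv, hNv⟩, hPv⟩⟩ := key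
    rcases le_total (u ⬝ᵥ (P *ᵥ v) - α * (u ⬝ᵥ (N *ᵥ v))) 0 with hb | hb
    · exact segment_aux hP hN h α u v (hne u hu) (hne v hv) hNu hNv hPu hPv hb
    · have e1 : qfm P (-v) = qfm P v := by simp [qfm, mulVec_neg]
      have e2 : qfm N (-v) = qfm N v := by simp [qfm, mulVec_neg]
      refine segment_aux hP hN h α u (-v) (hne u hu) (neg_ne_zero.mpr (hne v hv)) hNu
        (by rw [e2]; exact hNv) hPu (by rw [e1, e2]; exact hPv) ?_
      simp only [mulVec_neg, dotProduct_neg]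
      linarith
  · intro α hα
    obtain ⟨v, hv, hle⟩ := hcov α hα
    rcases le_total 0 (qfm N v) with h0 | h0
    · exact Or.inl ⟨v, ⟨hv, h0⟩, hle⟩
    · exact Or.inr ⟨v, ⟨hv, h0⟩, hle⟩
  · obtain ⟨α, hα, H⟩ := hlarge
    obtain ⟨v, hv, hle⟩ := hcov α hα
    refine ⟨α, hα, v, ⟨hv, ?_⟩, hle⟩
    by_contra h0
    have h0' : qfm N v ≤ 0 := (not_le.mp h0).le
    exact absurd (H v ⟨hv, h0'⟩ h0') (not_lt.mpr hle)
  · obtain ⟨v, hv, hle⟩ := hcov 0 le_rfl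
    refine ⟨0, Set.mem_Ici.mpr le_rfl, v, ⟨hv, ?_⟩, hle⟩
    by_contra h0
    have := h v (hne v hv) (not_le.mp h0).le
    linarith

lemma stackIZ_mulVec {q r : ℕ} (Z : Matrix (Fin r) (Fin q) ℝ) (x : Fin q → ℝ) :
    stackIZ Z *ᵥ x = Sum.elim x (Z *ᵥ x) := by
  ext i
  rcases i with i | i <;> simp [stackIZ, mulVec, dotProduct]

lemma qfm_stack {q r : ℕ} (Z : Matrix (Fin r) (Fin q) ℝ)
    (A : Matrix (Fin q ⊕ Fin r) (Fin q ⊕ Fin r) ℝ) (x : Fin q → ℝ) :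
    qfm ((stackIZ Z)ᵀ * A * stackIZ Z) x = qfm A (Sum.elim x (Z *ᵥ x)) := by
  rw [← stackIZ_mulVec, qfm, qfm, ← mulVec_mulVec, ← mulVec_mulVec, dotProduct_mulVec,
    vecMul_transpose]

lemma block_symm {q r : ℕ} {A : Matrix (Fin q) (Fin q) ℝ} (B : Matrix (Fin q) (Fin r) ℝ)
    {D : Matrix (Fin r) (Fin r) ℝ} (hA : A.IsSymm) (hD : D.IsSymm) :
    (fromBlocks A B Bᵀ D).IsSymm := by
  rw [Matrix.IsSymm, fromBlocks_transpose, hA.eq, hD.eq, transpose_transpose]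

lemma stack_symm {q r : ℕ} (Z : Matrix (Fin r) (Fin q) ℝ)
    {A : Matrix (Fin q ⊕ Fin r) (Fin q ⊕ Fin r) ℝ} (hA : A.IsSymm) :
    ((stackIZ Z)ᵀ * A * stackIZ Z).IsSymm := by
  rw [Matrix.IsSymm, transpose_mul, transpose_mul, transpose_transpose, hA.eq, Matrix.mul_assoc]

lemma qfm_schur {q r : ℕ} (A : Matrix (Fin q) (Fin q) ℝ) (B : Matrix (Fin q) (Fin r) ℝ)
    {D : Matrix (Fin r) (Fin r) ℝ} (hD : D.IsSymm) (hu : IsUnit D) (x : Fin q → ℝ)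
    (y : Fin r → ℝ) :
    qfm (fromBlocks A B Bᵀ D) (Sum.elim x y) =
      qfm D ((D⁻¹ * Bᵀ) *ᵥ x + y) + qfm (A - B * D⁻¹ * Bᵀ) x := by
  have := hu.invertible
  have := schur_complement_eq₂₂ A B x y (D := D) (by simpa [IsHermitian] using hD.eq)
  simpa only [qfm, dotProduct_mulVec, conjTranspose_eq_transpose_of_trivial, star_trivial] using this

lemma posSemidef_iff_qfm {ι : Type*} [Fintype ι] {A : Matrix ι ι ℝ} :
    A.PosSemidef ↔ A.IsSymm ∧ ∀ x, 0 ≤ qfm A x := by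
  rw [posSemidef_iff_dotProduct_mulVec]
  simp [qfm, IsHermitian, Matrix.IsSymm]

lemma posDef_iff_qfm {ι : Type*} [Fintype ι] {A : Matrix ι ι ℝ} :
    A.PosDef ↔ A.IsSymm ∧ ∀ x, x ≠ 0 → 0 < qfm A x := by
  rw [posDef_iff_dotProduct_mulVec]
  simp [qfm, IsHermitian, Matrix.IsSymm]

lemma qfm_sub_smul {ι : Type*} [Fintype ι] (A B : Matrix ι ι ℝ) (α : ℝ) (v : ι → ℝ) :
    qfm (A - α • B) v = qfm A v - α * qfm B v := by
  simp [qfm, sub_mulVec, smul_mulVec, dotProduct_sub]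

/-- every vector in the cone is reached by some feasible `Z`. -/
lemma exists_Z {q r : ℕ} (A : Matrix (Fin q) (Fin q) ℝ) (B : Matrix (Fin q) (Fin r) ℝ)
    {D : Matrix (Fin r) (Fin r) ℝ} (hD : D.IsSymm) (hu : IsUnit D)
    (hneg : ∀ y, y ≠ 0 → qfm D y < 0)
    (hS : (A - B * D⁻¹ * Bᵀ).PosSemidef) (x : Fin q → ℝ) (y : Fin r → ℝ)
    (h : 0 ≤ qfm (fromBlocks A B Bᵀ D) (Sum.elim x y)) :
    ∃ Z : Matrix (Fin r) (Fin q) ℝ, Z *ᵥ x = y ∧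
      ∀ z, 0 ≤ qfm (fromBlocks A B Bᵀ D) (Sum.elim z (Z *ᵥ z)) := by
  simp only [qfm_schur A B hD hu] at h ⊢
  obtain ⟨hs, hS⟩ := posSemidef_iff_qfm.mp hS
  set S := A - B * D⁻¹ * Bᵀ
  set W := D⁻¹ * Bᵀ
  set u := W *ᵥ x + y with hudef
  by_cases h0 : qfm S x = 0
  · have hu0 : u = 0 := by
      by_contra hne
      have := hneg u hne
      linarith
    refine ⟨-W, ?_, ?_⟩
    · rw [neg_mulVec]
      exact neg_eq_of_add_eq_zero_right (hudef ▸ hu0)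
    · intro z
      rw [neg_mulVec, add_neg_cancel]
      have := hS z
      simpa [qfm] using this
  · have hpos : 0 < qfm S x := lt_of_le_of_ne (hS x) (Ne.symm h0)
    have hZ : ∀ z, (-W + vecMulVec u ((qfm S x)⁻¹ • (S *ᵥ x))) *ᵥ z =
        -(W *ᵥ z) + ((qfm S x)⁻¹ * (x ⬝ᵥ (S *ᵥ z))) • u := by
      intro z
      have e : (S *ᵥ x) ⬝ᵥ z = x ⬝ᵥ (S *ᵥ z) := by
        rw [dotProduct_mulVec, ← mulVec_transpose, hs.eq]
      rw [add_mulVec, neg_mulVec, vecMulVec_mulVec, smul_dotProduct, e, smul_eq_mul, op_smul_eq_smul]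
    refine ⟨-W + vecMulVec u ((qfm S x)⁻¹ • (S *ᵥ x)), ?_, ?_⟩
    · rw [hZ]
      have : (qfm S x)⁻¹ * (x ⬝ᵥ (S *ᵥ x)) = 1 := inv_mul_cancel₀ h0
      rw [this, one_smul, hudef]
      abel
    · intro z
      rw [hZ, add_neg_cancel_left, qfm_smul]
      set c := (qfm S x)⁻¹ * (x ⬝ᵥ (S *ᵥ z)) with hc
      have hc' : x ⬝ᵥ (S *ᵥ z) = c * qfm S x := by
        rw [hc]; field_simp
      have h1 := hS ((-c) • x + (1 : ℝ) • z)
      rw [qfm_comb hs, hc'] at h1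
      have h2 := mul_nonneg (sq_nonneg c) h
      nlinarith

/-- **Strict matrix S-lemma (Lemma 4.3).** With `M = [[M₁₁,M₁₂],[M₁₂ᵀ,M₂₂]]` and
`N = [[N₁₁,N₁₂],[N₁₂ᵀ,N₂₂]]` symmetric, `N₂₂ ≺ 0`, `ker N₂₂ ⊆ ker N₁₂` and the Schur
complement `N₁₁ - N₁₂ N₂₂⁻¹ N₁₂ᵀ ⪰ 0`, the inclusion
`{Z : [I;Z]ᵀ N [I;Z] ⪰ 0} ⊆ {Z : [I;Z]ᵀ M [I;Z] ≻ 0}` holds iff `M - αN ≻ 0` for some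
`α ≥ 0`. -/
theorem stmt_7 (q r : ℕ) (hq : 1 ≤ q) (hr : 1 ≤ r)
    (M11 : Matrix (Fin q) (Fin q) ℝ) (M12 : Matrix (Fin q) (Fin r) ℝ)
    (M22 : Matrix (Fin r) (Fin r) ℝ)
    (N11 : Matrix (Fin q) (Fin q) ℝ) (N12 : Matrix (Fin q) (Fin r) ℝ)
    (N22 : Matrix (Fin r) (Fin r) ℝ)
    (hM11 : M11.IsSymm) (hM22 : M22.IsSymm) (hN11 : N11.IsSymm) (hN22s : N22.IsSymm)
    (hN22 : (-N22).PosDef)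
    (hker : ∀ x : Fin r → ℝ, N22.mulVec x = 0 → N12.mulVec x = 0)
    (hschur : (N11 - N12 * N22⁻¹ * N12ᵀ).PosSemidef) :
    (∀ Z : Matrix (Fin r) (Fin q) ℝ,
        ((stackIZ Z)ᵀ * Matrix.fromBlocks N11 N12 N12ᵀ N22 * stackIZ Z).PosSemidef →
        ((stackIZ Z)ᵀ * Matrix.fromBlocks M11 M12 M12ᵀ M22 * stackIZ Z).PosDef) ↔
      ∃ α : ℝ, 0 ≤ α ∧
        (Matrix.fromBlocks M11 M12 M12ᵀ M22 -
          α • Matrix.fromBlocks N11 N12 N12ᵀ N22).PosDef := by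
  have sM := block_symm M12 hM11 hM22
  have sN := block_symm N12 hN11 hN22s
  have hneg : ∀ y, y ≠ 0 → qfm N22 y < 0 := by
    intro y hy
    have := (posDef_iff_qfm.mp hN22).2 y hy
    simp only [qfm, neg_mulVec, dotProduct_neg] at this ⊢
    linarith
  have hunit : IsUnit N22 := by
    simpa using hN22.isUnit.neg
  constructor
  · intro H
    obtain ⟨α, hα, hpos⟩ := strict_slemma sM sN (by
      intro v hv hNv
      obtain ⟨x, y, rfl⟩ : ∃ x y, v = Sum.elim x y := ⟨v ∘ Sum.inl, v ∘ Sum.inr, by simp⟩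
      obtain ⟨Z, hZ, hf⟩ := exists_Z N11 N12 hN22s hunit hneg hschur x y hNv
      have hx : x ≠ 0 := by
        rintro rfl
        apply hv
        rw [← hZ, mulVec_zero]
        ext i
        rcases i with i | i <;> rfl
      have := (posDef_iff_qfm.mp (H Z (posSemidef_iff_qfm.mpr
        ⟨stack_symm Z sN, fun z => by rw [qfm_stack]; exact hf z⟩))).2 x hx
      rwa [qfm_stack, hZ] at this)
    refine ⟨α, hα, posDef_iff_qfm.mpr ⟨sM.sub (sN.smul α), fun v hv => ?_⟩⟩
    rw [qfm_sub_smul]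
    exact hpos v hv
  · rintro ⟨α, hα, hpd⟩ Z hZ
    refine posDef_iff_qfm.mpr ⟨stack_symm Z sM, fun x hx => ?_⟩
    have h1 := (posSemidef_iff_qfm.mp hZ).2 x
    have hne : Sum.elim x (Z *ᵥ x) ≠ 0 := by
      intro h0
      apply hx
      ext i
      exact congrFun h0 (Sum.inl i)
    have h2 := (posDef_iff_qfm.mp hpd).2 _ hne
    rw [qfm_sub_smul] at h2
    rw [qfm_stack] at h1 ⊢
    have := mul_nonneg hα h1
    linarith
end

section
/- Let L ∈ ℕ with L ≥ 1, let m, p ≥ 1, set q := m + p and n := qL. Let Π ∈ ℝ^{(p+n)×(p+n)} be symmetric with (2,2)-block Π₂₂ ∈ ℝ^{n×n} negative definite, and assume there exists R_s ∈ ℝ^{p×n} such that [I_p; R_s^⊤]^⊤ Π [I_p; R_s^⊤] is positive semidefinite. Define the consistent set Σ := { R ∈ ℝ^{p×n} : [I_p; R^⊤]^⊤ Π [I_p; R^⊤] is positive semidefinite }. Define J_p := [0_{p×(n−p)} I_p] ∈ ℝ^{p×n}, T := [[J_p, 0_{p×n}],[0_{n×n}, I_n]] ∈ ℝ^{(p+n)×2n},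 N := T^⊤ Π T ∈ ℝ^{2n×2n}, and J_{q(L−1)} := [0_{q(L−1)×q} I_{q(L−1)}] ∈ ℝ^{q(L−1)×n}. Then the following are equivalent: (i) there exist a symmetric positive definite Ψ ∈ ℝ^{n×n} and C ∈ ℝ^{m×n} such that for every R ∈ Σ, the matrix A_R^⊤ Ψ + Ψ A_R is positive definite, where A_R ∈ ℝ^{n×n} is obtained by stacking the rows of −J_{q(L−1)}, of C, and of R; (ii) there exist a symmetric positive definite Φ ∈ ℝ^{n×n} and D ∈ ℝ^{m×n} such that the 2n×2n matrix [[E^⊤ + E, Φ],[Φ, 0_{n×n}]] − N is positive definite, where E ∈ ℝ^{n×n} is obtained by stacking the rows of −J_{q(L−1)}Φ, of D, and of 0_{p×n}. Moreover, if (ii) holds, then with C := DΦ^{−1} and Ψ := Φ^{−1}, the matrix A_R^⊤ Ψ + Ψ A_R is positive definite for every R ∈ Σ. -/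
open Matrix

/-- Index type for `ℝ^{qL}`, `q = m+p`: block `ℓ ∈ {0,…,L-1}`, then input/output
component. -/
abbrev Idx (L m p : ℕ) := Fin L × (Fin m ⊕ Fin p)

/-- The `(p+n) × p` matrix `[I_p; Rᵀ]` obtained by stacking `I_p` on top of `Rᵀ`. -/
def stackIp {L m p : ℕ} (R : Matrix (Fin p) (Idx L m p) ℝ) :
    Matrix (Fin p ⊕ Idx L m p) (Fin p) ℝ :=
  Matrix.of (Sum.elim (fun a j => if a = j then (1 : ℝ) else 0) (fun b j => R j b))

/-- `J_p = [0_{p×(n-p)} I_p] ∈ ℝ^{p×n}`: selects the last `p` coordinates. -/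
def JpM (L m p : ℕ) : Matrix (Fin p) (Idx L m p) ℝ :=
  Matrix.of fun i c => if (c.1 : ℕ) + 1 = L ∧ c.2 = Sum.inr i then 1 else 0

/-- `A_R = [-J_{q(L-1)}; C; R] ∈ ℝ^{n×n}`: rows of `-J_{q(L-1)} = -[0 I_{q(L-1)}]`,
then rows of `C`, then rows of `R`. -/
def AmatCR (L m p : ℕ) (C : Matrix (Fin m) (Idx L m p) ℝ)
    (R : Matrix (Fin p) (Idx L m p) ℝ) : Matrix (Idx L m p) (Idx L m p) ℝ :=
  Matrix.of fun r c =>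
    if (r.1 : ℕ) + 1 < L then
      (if (c.1 : ℕ) = (r.1 : ℕ) + 1 ∧ c.2 = r.2 then -1 else 0)
    else Sum.elim (fun a => C a c) (fun b => R b c) r.2

/-- `E = [-J_{q(L-1)} Φ; D; 0_{p×n}] ∈ ℝ^{n×n}`. -/
def EmatPhi (L m p : ℕ) (Φ : Matrix (Idx L m p) (Idx L m p) ℝ)
    (D : Matrix (Fin m) (Idx L m p) ℝ) : Matrix (Idx L m p) (Idx L m p) ℝ :=
  Matrix.of fun r c =>
    if h : (r.1 : ℕ) + 1 < L then -Φ (⟨(r.1 : ℕ) + 1, h⟩, r.2) c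
    else Sum.elim (fun a => D a c) (fun _ => (0 : ℝ)) r.2

theorem scalar_pair (n1 n2 b m2 c α : ℝ) (h1 : n1 < 0) (h2 : 0 < n2)
    (h : ∀ t : ℝ, n1 * t^2 + b * t + n2 = 0 → 0 < α * n1 * t^2 + c * t + m2) :
    α * n2 < m2 := by
  set s := Real.sqrt (b^2 - 4*n1*n2) with hs
  have hpos : 0 < -(4*n1*n2) := by nlinarith [mul_pos (neg_pos.2 h1) h2]
  have hs2 : s^2 = b^2 - 4*n1*n2 := Real.sq_sqrt (by nlinarith [sq_nonneg b])
  have hs0 : 0 ≤ s := Real.sqrt_nonneg _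
  have hab : |b| < s := abs_lt_of_sq_lt_sq (by nlinarith) hs0
  obtain ⟨hb1, hb2⟩ := abs_lt.1 hab
  have hn : n1 ≠ 0 := h1.ne
  have r1 : n1 * ((-b+s)/(2*n1))^2 + b * ((-b+s)/(2*n1)) + n2 = 0 := by
    field_simp; nlinarith
  have r2 : n1 * ((-b-s)/(2*n1))^2 + b * ((-b-s)/(2*n1)) + n2 = 0 := by
    field_simp; nlinarith
  have t1 : (-b+s)/(2*n1) < 0 := div_neg_of_pos_of_neg (by linarith) (by linarith)
  have t2 : 0 < (-b-s)/(2*n1) := div_pos_of_neg_of_neg (by linarith) (by linarith)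
  have e1 := h _ r1
  have e2 := h _ r2
  generalize (-b+s)/(2*n1) = u at *
  generalize (-b-s)/(2*n1) = v at *
  have f1 : 0 < (c - α*b)*u + (m2 - α*n2) := by linear_combination e1 + α * r1
  have f2 : 0 < (c - α*b)*v + (m2 - α*n2) := by linear_combination e2 + α * r2
  by_contra hcon
  push Not at hcon
  rcases le_total 0 (c - α*b) with g | g
  · nlinarith [mul_nonneg g (neg_nonneg.2 t1.le)]
  · nlinarith [mul_nonneg (neg_nonneg.2 g) t2.le]

section Aux

variable {ι κ : Type*} [Fintype ι] [Fintype κ]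

theorem qf_expand (A : Matrix ι ι ℝ) (z w : ι → ℝ) (t : ℝ) :
    (t • z + w) ⬝ᵥ A *ᵥ (t • z + w) =
      (z ⬝ᵥ A *ᵥ z) * t^2 + (z ⬝ᵥ A *ᵥ w + w ⬝ᵥ A *ᵥ z) * t + w ⬝ᵥ A *ᵥ w := by
  simp only [mulVec_add, mulVec_smul, add_dotProduct, dotProduct_add, smul_dotProduct,
    dotProduct_smul, smul_eq_mul]
  ring

theorem qf_smul (A : Matrix ι ι ℝ) (z : ι → ℝ) (t : ℝ) :
    (t • z) ⬝ᵥ A *ᵥ (t • z) = t^2 * (z ⬝ᵥ A *ᵥ z) := by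
  simp only [mulVec_smul, smul_dotProduct, dotProduct_smul, smul_eq_mul]
  ring

theorem qf_cont (A : Matrix ι ι ℝ) : Continuous fun z : ι → ℝ => z ⬝ᵥ A *ᵥ z := by
  fun_prop

theorem slemma_weak (A B : Matrix ι ι ℝ)
    (h : ∀ z : ι → ℝ, z ≠ 0 → 0 ≤ z ⬝ᵥ B *ᵥ z → 0 < z ⬝ᵥ A *ᵥ z) :
    ∃ α : ℝ, ∀ z : ι → ℝ, α * (z ⬝ᵥ B *ᵥ z) ≤ z ⬝ᵥ A *ᵥ z := by
  set K : Set (ι → ℝ) := Metric.sphere 0 1 ∩ {z | z ⬝ᵥ A *ᵥ z ≤ 0} with hK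
  have hKc : IsCompact K :=
    (isCompact_sphere _ _).inter_right (isClosed_le (qf_cont A) continuous_const)
  have nz : ∀ z ∈ K, z ≠ 0 := by
    rintro z ⟨hz, -⟩ rfl
    simp at hz
  have hBK : ∀ z ∈ K, z ⬝ᵥ B *ᵥ z < 0 := by
    intro z hz
    by_contra hc
    exact absurd (h z (nz z hz) (not_lt.1 hc)) (not_lt.2 hz.2)
  have norml : ∀ z : ι → ℝ, z ≠ 0 → z ⬝ᵥ A *ᵥ z ≤ 0 → ‖z‖⁻¹ • z ∈ K := by
    intro z hz hA
    refine ⟨?_, ?_⟩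
    · simp [norm_smul, hz]
    · rw [Set.mem_ofPred_eq, qf_smul]
      exact mul_nonpos_of_nonneg_of_nonpos (sq_nonneg _) hA
  by_cases hne : K.Nonempty
  · have hcont : ContinuousOn (fun z : ι → ℝ => (z ⬝ᵥ A *ᵥ z) / (z ⬝ᵥ B *ᵥ z)) K :=
      (qf_cont A).continuousOn.div (qf_cont B).continuousOn fun z hz => (hBK z hz).ne
    obtain ⟨z1, hz1, hmax⟩ := hKc.exists_isMaxOn hne hcont
    set α := (z1 ⬝ᵥ A *ᵥ z1) / (z1 ⬝ᵥ B *ᵥ z1) with hα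
    have hα0 : 0 ≤ α := div_nonneg_of_nonpos hz1.2 (hBK z1 hz1).le
    have hM1 : z1 ⬝ᵥ A *ᵥ z1 = α * (z1 ⬝ᵥ B *ᵥ z1) := by
      rw [hα, div_mul_cancel₀ _ (hBK z1 hz1).ne]
    refine ⟨α, fun z => ?_⟩
    rcases lt_or_ge 0 (z ⬝ᵥ B *ᵥ z) with hB | hB
    · apply le_of_lt
      refine scalar_pair _ _ (z1 ⬝ᵥ B *ᵥ z + z ⬝ᵥ B *ᵥ z1) _ (z1 ⬝ᵥ A *ᵥ z + z ⬝ᵥ A *ᵥ z1) α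
        (hBK z1 hz1) hB ?_
      · intro t ht
        rw [← qf_expand] at ht
        rw [← hM1, ← qf_expand]
        refine h _ ?_ ht.ge
        intro h0
        have : z = (-t) • z1 := by
          rw [neg_smul]; exact eq_neg_of_add_eq_zero_right h0
        rw [this, qf_smul] at hB
        nlinarith [hBK z1 hz1, sq_nonneg (-t)]
    · by_cases hA : z ⬝ᵥ A *ᵥ z ≤ 0
      · by_cases hz : z = 0
        · simp [hz]
        have hk := norml z hz hA
        have := hmax hk
        have h2 : (‖z‖⁻¹ • z) ⬝ᵥ A *ᵥ (‖z‖⁻¹ • z) / ((‖z‖⁻¹ • z) ⬝ᵥ B *ᵥ (‖z‖⁻¹ • z)) ≤ α := this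
        rw [div_le_iff_of_neg (hBK _ hk), qf_smul, qf_smul] at h2
        have hp : 0 < ‖z‖⁻¹^2 := by positivity
        refine le_of_mul_le_mul_left ?_ hp
        linarith
      · nlinarith [mul_nonneg hα0 (neg_nonneg.2 hB)]
  · refine ⟨0, fun z => ?_⟩
    by_cases hz : z = 0
    · simp [hz]
    by_contra hc
    exact hne ⟨_, norml z hz (by linarith)⟩

theorem slemma_strict [DecidableEq ι] (A B : Matrix ι ι ℝ)
    (h : ∀ z : ι → ℝ, z ≠ 0 → 0 ≤ z ⬝ᵥ B *ᵥ z → 0 < z ⬝ᵥ A *ᵥ z) :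
    ∃ α : ℝ, ∀ z : ι → ℝ, z ≠ 0 → α * (z ⬝ᵥ B *ᵥ z) < z ⬝ᵥ A *ᵥ z := by
  have dp : ∀ z : ι → ℝ, z ≠ 0 → 0 < z ⬝ᵥ z := fun z hz => by
    have := dotProduct_star_self_pos_iff.2 hz
    simpa using this
  have key : ∃ ε : ℝ, 0 < ε ∧ ∀ z : ι → ℝ, z ≠ 0 → 0 ≤ z ⬝ᵥ B *ᵥ z →
      ε * (z ⬝ᵥ z) < z ⬝ᵥ A *ᵥ z := by
    set K : Set (ι → ℝ) := Metric.sphere 0 1 ∩ {z | 0 ≤ z ⬝ᵥ B *ᵥ z} with hK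
    have hKc : IsCompact K :=
      (isCompact_sphere _ _).inter_right (isClosed_le continuous_const (qf_cont B))
    have nz : ∀ z ∈ K, z ≠ 0 := by
      rintro z ⟨hz, -⟩ rfl
      simp at hz
    have norml : ∀ z : ι → ℝ, z ≠ 0 → 0 ≤ z ⬝ᵥ B *ᵥ z → ‖z‖⁻¹ • z ∈ K := by
      intro z hz hA
      refine ⟨?_, ?_⟩
      · simp [norm_smul, hz]
      · rw [Set.mem_ofPred_eq, qf_smul]
        positivity
    by_cases hne : K.Nonempty
    · have hcont : ContinuousOn (fun z : ι → ℝ => (z ⬝ᵥ A *ᵥ z) / (z ⬝ᵥ z)) K :=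
        (qf_cont A).continuousOn.div (by fun_prop) fun z hz => (dp z (nz z hz)).ne'
      obtain ⟨z1, hz1, hmin⟩ := hKc.exists_isMinOn hne hcont
      set α := (z1 ⬝ᵥ A *ᵥ z1) / (z1 ⬝ᵥ z1) with hα
      have hα0 : 0 < α := div_pos (h z1 (nz _ hz1) hz1.2) (dp z1 (nz _ hz1))
      refine ⟨α / 2, by positivity, fun z hz hB => ?_⟩
      have hk := norml z hz hB
      have h2 : α ≤ (‖z‖⁻¹ • z) ⬝ᵥ A *ᵥ (‖z‖⁻¹ • z) / ((‖z‖⁻¹ • z) ⬝ᵥ (‖z‖⁻¹ • z)) := hmin hk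
      rw [le_div_iff₀ (dp _ (nz _ hk)), qf_smul] at h2
      simp only [smul_dotProduct, dotProduct_smul, smul_eq_mul] at h2
      have hp : 0 < ‖z‖⁻¹^2 := by positivity
      have h3 : α * (z ⬝ᵥ z) ≤ z ⬝ᵥ A *ᵥ z := by
        refine le_of_mul_le_mul_left ?_ hp
        linarith
      nlinarith [mul_pos hα0 (dp z hz)]
    · exact ⟨1, one_pos, fun z hz hB => absurd ⟨_, norml z hz hB⟩ hne⟩
  obtain ⟨ε, hε, hk⟩ := key
  have e : ∀ z : ι → ℝ, z ⬝ᵥ (A - ε • (1 : Matrix ι ι ℝ)) *ᵥ z = z ⬝ᵥ A *ᵥ z - ε * (z ⬝ᵥ z) := by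
    intro z
    simp [sub_mulVec, smul_mulVec, dotProduct_sub]
  obtain ⟨α, hα⟩ := slemma_weak (A - ε • (1 : Matrix ι ι ℝ)) B (fun z hz hB => by
    rw [e]; linarith [hk z hz hB])
  refine ⟨α, fun z hz => ?_⟩
  have := hα z
  rw [e] at this
  nlinarith [mul_pos hε (dp z hz)]

theorem schur_form [DecidableEq ι] (P : Matrix (κ ⊕ ι) (κ ⊕ ι) ℝ) (hsym : P.IsSymm)
    (hneg : (-P.toBlocks₂₂).PosDef) :
    ∃ (G : Matrix ι κ ℝ) (S : Matrix κ κ ℝ), S.IsSymm ∧ ∀ (x : κ → ℝ) (y : ι → ℝ),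
      (Sum.elim x y) ⬝ᵥ P *ᵥ (Sum.elim x y) =
        x ⬝ᵥ S *ᵥ x - (y - G *ᵥ x) ⬝ᵥ (-P.toBlocks₂₂) *ᵥ (y - G *ᵥ x) := by
  set A := P.toBlocks₁₁
  set B := P.toBlocks₁₂
  set D := P.toBlocks₂₂ with hDdef
  have hP : P = Matrix.fromBlocks A B Bᴴ D := by
    conv_lhs => rw [← Matrix.fromBlocks_toBlocks P]
    congr 1
    ext i j
    simpa [B, toBlocks₁₂, toBlocks₂₁] using (hsym.apply (Sum.inl j) (Sum.inr i))
  have hD : D.IsHermitian := by simpa using hneg.1.neg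
  have hA : A.IsHermitian := by
    ext i j
    simpa [A, toBlocks₁₁] using (hsym.apply (Sum.inl i) (Sum.inl j))
  have hu : IsUnit D := by simpa using hneg.isUnit.neg
  letI := hu.invertible
  refine ⟨-(D⁻¹ * Bᴴ), A - B * D⁻¹ * Bᴴ, ?_, fun x y => ?_⟩
  · have : (A - B * D⁻¹ * Bᴴ).IsHermitian := hA.sub (isHermitian_mul_mul_conjTranspose B hD.inv)
    simpa [IsHermitian, IsSymm] using this
  · have := schur_complement_eq₂₂ A B x y hD
    rw [← hP] at this
    simp only [star_trivial, ← dotProduct_mulVec] at this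
    have e : y - (-(D⁻¹ * Bᴴ)) *ᵥ x = (D⁻¹ * Bᴴ) *ᵥ x + y := by
      rw [neg_mulVec]; abel
    rw [e, neg_mulVec, dotProduct_neg, this]
    ring

theorem cs_form (S : Matrix κ κ ℝ) (hS : S.IsSymm) (h : ∀ x : κ → ℝ, 0 ≤ x ⬝ᵥ S *ᵥ x)
    (u v : κ → ℝ) : (u ⬝ᵥ S *ᵥ v)^2 ≤ (u ⬝ᵥ S *ᵥ u) * (v ⬝ᵥ S *ᵥ v) := by
  have e : v ⬝ᵥ S *ᵥ u = u ⬝ᵥ S *ᵥ v := by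
    rw [dotProduct_mulVec, ← mulVec_transpose, hS.eq, dotProduct_comm]
  have key : ∀ t : ℝ, 0 ≤ (v ⬝ᵥ S *ᵥ v) * (t * t) + (2 * (u ⬝ᵥ S *ᵥ v)) * t + u ⬝ᵥ S *ᵥ u := by
    intro t
    have := h (t • v + u)
    rw [qf_expand, e] at this
    linarith
  have := discrim_le_zero key
  rw [discrim] at this
  linarith

theorem extend_form [DecidableEq ι] (P : Matrix (κ ⊕ ι) (κ ⊕ ι) ℝ) (hsym : P.IsSymm)
    (hneg : (-P.toBlocks₂₂).PosDef) (Z0 : Matrix ι κ ℝ)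
    (h0 : ∀ u : κ → ℝ, 0 ≤ (Sum.elim u (Z0 *ᵥ u)) ⬝ᵥ P *ᵥ (Sum.elim u (Z0 *ᵥ u)))
    (v : κ → ℝ) (y : ι → ℝ) (h : 0 ≤ (Sum.elim v y) ⬝ᵥ P *ᵥ (Sum.elim v y)) :
    ∃ Z : Matrix ι κ ℝ,
      (∀ u : κ → ℝ, 0 ≤ (Sum.elim u (Z *ᵥ u)) ⬝ᵥ P *ᵥ (Sum.elim u (Z *ᵥ u))) ∧ Z *ᵥ v = y := by
  obtain ⟨G, S, hS, hf⟩ := schur_form P hsym hneg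
  have hQ : ∀ w : ι → ℝ, 0 ≤ w ⬝ᵥ (-P.toBlocks₂₂) *ᵥ w := fun w => by
    simpa using hneg.posSemidef.dotProduct_mulVec_nonneg w
  have hQ0 : ∀ w : ι → ℝ, w ⬝ᵥ (-P.toBlocks₂₂) *ᵥ w ≤ 0 → w = 0 := fun w hw => by
    by_contra hne
    have := hneg.dotProduct_mulVec_pos hne
    rw [star_trivial] at this
    linarith
  have hSn : ∀ x : κ → ℝ, 0 ≤ x ⬝ᵥ S *ᵥ x := fun x => by
    have := h0 x
    rw [hf] at this
    linarith [hQ (Z0 *ᵥ x - G *ᵥ x)]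
  rw [hf] at h
  set w := y - G *ᵥ v with hw
  rcases (hSn v).eq_or_lt with hσ | hσ
  · have hw0 : w = 0 := hQ0 w (by linarith)
    refine ⟨G, fun u => ?_, ?_⟩
    · rw [hf]; simpa using hSn u
    · exact (sub_eq_zero.1 hw0).symm
  · set σ := v ⬝ᵥ S *ᵥ v with hσd
    have hZ : ∀ u, (G + σ⁻¹ • vecMulVec w (S *ᵥ v)) *ᵥ u =
        G *ᵥ u + (σ⁻¹ * (u ⬝ᵥ S *ᵥ v)) • w := by
      intro u
      rw [add_mulVec, smul_mulVec, vecMulVec_mulVec, dotProduct_comm u]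
      ext i
      simp
      ring
    refine ⟨G + σ⁻¹ • vecMulVec w (S *ᵥ v), fun u => ?_, ?_⟩
    · rw [hf, hZ, add_sub_cancel_left, qf_smul]
      have cs := cs_form S hS hSn u v
      rw [← hσd] at cs
      have h1 : (σ⁻¹ * (u ⬝ᵥ S *ᵥ v))^2 * (w ⬝ᵥ (-P.toBlocks₂₂) *ᵥ w) ≤
          (σ⁻¹ * (u ⬝ᵥ S *ᵥ v))^2 * σ := mul_le_mul_of_nonneg_left (by linarith) (sq_nonneg _)
      have h2 : (σ⁻¹ * (u ⬝ᵥ S *ᵥ v))^2 * σ = (u ⬝ᵥ S *ᵥ v)^2 / σ := by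
        field_simp
      have h3 : (u ⬝ᵥ S *ᵥ v)^2 / σ ≤ u ⬝ᵥ S *ᵥ u := (div_le_iff₀ hσ).2 cs
      linarith
    · rw [hZ, ← hσd, inv_mul_cancel₀ hσ.ne', one_smul, hw]
      abel

theorem posDef_of_form (M : Matrix ι ι ℝ) (hM : M.IsSymm)
    (h : ∀ x : ι → ℝ, x ≠ 0 → 0 < x ⬝ᵥ M *ᵥ x) : M.PosDef :=
  .of_dotProduct_mulVec_pos (by simpa [IsHermitian, IsSymm] using hM)
    fun x hx => by simpa using h x hx

theorem PosDef_form {M : Matrix ι ι ℝ} (h : M.PosDef) (x : ι → ℝ) (hx : x ≠ 0) :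
    0 < x ⬝ᵥ M *ᵥ x := by simpa using h.dotProduct_mulVec_pos hx

theorem PosDef_symm {M : Matrix ι ι ℝ} (h : M.PosDef) : M.IsSymm := by
  simpa [IsHermitian, IsSymm] using h.1

theorem congr_form (T : Matrix ι κ ℝ) (P : Matrix ι ι ℝ) (v : κ → ℝ) :
    v ⬝ᵥ (Tᵀ * P * T) *ᵥ v = (T *ᵥ v) ⬝ᵥ P *ᵥ (T *ᵥ v) := by
  rw [← mulVec_mulVec, ← mulVec_mulVec, dotProduct_mulVec, vecMul_transpose]

end Aux

theorem stackIp_mulVec {L m p : ℕ} (R : Matrix (Fin p) (Idx L m p) ℝ) (v : Fin p → ℝ) :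
    stackIp R *ᵥ v = Sum.elim v (Rᵀ *ᵥ v) := by
  ext i
  rcases i with i | i
  · simp [stackIp, mulVec, dotProduct]
  · simp [stackIp, mulVec, dotProduct]

theorem sigma_iff {L m p : ℕ} (Pim : Matrix (Fin p ⊕ Idx L m p) (Fin p ⊕ Idx L m p) ℝ)
    (hsym : Pim.IsSymm) (R : Matrix (Fin p) (Idx L m p) ℝ) :
    ((stackIp R)ᵀ * Pim * stackIp R).PosSemidef ↔
      ∀ u : Fin p → ℝ, 0 ≤ (Sum.elim u (Rᵀ *ᵥ u)) ⬝ᵥ Pim *ᵥ (Sum.elim u (Rᵀ *ᵥ u)) := by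
  rw [posSemidef_iff_dotProduct_mulVec]
  simp only [star_trivial, congr_form, stackIp_mulVec]
  refine ⟨fun h => h.2, fun h => ⟨?_, h⟩⟩
  simp [IsHermitian, Matrix.mul_assoc, hsym.eq]

/-- `A_R Φ = E(Φ, CΦ) + J_pᵀ R Φ`. -/
theorem Amat_mul (L m p : ℕ) (C : Matrix (Fin m) (Idx L m p) ℝ)
    (R : Matrix (Fin p) (Idx L m p) ℝ) (Φ : Matrix (Idx L m p) (Idx L m p) ℝ) :
    AmatCR L m p C R * Φ = EmatPhi L m p Φ (C * Φ) + (JpM L m p)ᵀ * (R * Φ) := by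
  ext ⟨i, r⟩ c
  by_cases h : (i : ℕ) + 1 < L
  · have hne : ¬ ((i : ℕ) + 1 = L) := h.ne
    have e : ∀ x : Idx L m p, ((x.1 : ℕ) = (i : ℕ) + 1 ∧ x.2 = r) ↔ x = (⟨(i : ℕ) + 1, h⟩, r) := by
      rintro ⟨a, b⟩
      simp [Fin.ext_iff]
    simp only [Matrix.add_apply, Matrix.mul_apply (M := AmatCR L m p C R),
      Matrix.mul_apply (M := (JpM L m p)ᵀ)]
    simp [AmatCR, EmatPhi, JpM, h, hne, e]
  · have he : (i : ℕ) + 1 = L := by omega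
    simp only [Matrix.add_apply, Matrix.mul_apply (M := AmatCR L m p C R),
      Matrix.mul_apply (M := (JpM L m p)ᵀ)]
    rcases r with a | b
    · simp [AmatCR, EmatPhi, JpM, he, Matrix.mul_apply]
    · simp [AmatCR, EmatPhi, JpM, he, Matrix.mul_apply]

theorem Emat_smul (L m p : ℕ) (Φ : Matrix (Idx L m p) (Idx L m p) ℝ)
    (D : Matrix (Fin m) (Idx L m p) ℝ) (a : ℝ) :
    EmatPhi L m p (a • Φ) (a • D) = a • EmatPhi L m p Φ D := by
  ext ⟨i, r⟩ c
  by_cases h : (i : ℕ) + 1 < L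
  · simp [EmatPhi, h]
  · rcases r with r | r <;> simp [EmatPhi, h]

theorem sym_form {ι : Type*} [Fintype ι] (E : Matrix ι ι ℝ) (x : ι → ℝ) :
    x ⬝ᵥ (Eᵀ + E) *ᵥ x = 2 * (x ⬝ᵥ E *ᵥ x) := by
  rw [add_mulVec, dotProduct_add, mulVec_transpose, dotProduct_comm x (x ᵥ* E), ← dotProduct_mulVec]
  ring

theorem M_form {ι : Type*} [Fintype ι] (E Φ : Matrix ι ι ℝ) (hΦ : Φ.IsSymm) (x y : ι → ℝ) :
    (Sum.elim x y) ⬝ᵥ (Matrix.fromBlocks (Eᵀ + E) Φ Φ 0) *ᵥ (Sum.elim x y) =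
      2 * (x ⬝ᵥ E *ᵥ x) + 2 * (x ⬝ᵥ Φ *ᵥ y) := by
  have e : y ⬝ᵥ Φ *ᵥ x = x ⬝ᵥ Φ *ᵥ y := by
    rw [dotProduct_mulVec, ← mulVec_transpose, hΦ.eq, dotProduct_comm]
  rw [fromBlocks_mulVec, sumElim_dotProduct_sumElim]
  simp only [Sum.elim_comp_inl, Sum.elim_comp_inr, dotProduct_add, sym_form, e, zero_mulVec,
    dotProduct_zero]
  ring

/-- Lyapunov form of `A_R` at `Φ x`. -/
theorem lyap_form (L m p : ℕ) (C : Matrix (Fin m) (Idx L m p) ℝ)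
    (R : Matrix (Fin p) (Idx L m p) ℝ) (Φ Ψ : Matrix (Idx L m p) (Idx L m p) ℝ)
    (hΦ : Φ.IsSymm) (hΨ : Ψ.IsSymm) (hinv : Φ * Ψ = 1) (x : Idx L m p → ℝ) :
    (Φ *ᵥ x) ⬝ᵥ ((AmatCR L m p C R)ᵀ * Ψ + Ψ * AmatCR L m p C R) *ᵥ (Φ *ᵥ x) =
      2 * (x ⬝ᵥ EmatPhi L m p Φ (C * Φ) *ᵥ x) +
        2 * (x ⬝ᵥ Φ *ᵥ (Rᵀ *ᵥ (JpM L m p *ᵥ x))) := by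
  have h1 : (AmatCR L m p C R)ᵀ * Ψ = (Ψ * AmatCR L m p C R)ᵀ := by
    rw [transpose_mul, hΨ.eq]
  have h2 : (Φ *ᵥ x) ⬝ᵥ (Ψ * AmatCR L m p C R) *ᵥ (Φ *ᵥ x) =
      x ⬝ᵥ (AmatCR L m p C R * Φ) *ᵥ x := by
    rw [mulVec_mulVec, ← vecMul_transpose, ← dotProduct_mulVec, mulVec_mulVec, hΦ.eq,
      ← Matrix.mul_assoc, ← Matrix.mul_assoc, hinv, Matrix.one_mul]
  have h3 : x ⬝ᵥ ((JpM L m p)ᵀ * (R * Φ)) *ᵥ x = x ⬝ᵥ Φ *ᵥ (Rᵀ *ᵥ (JpM L m p *ᵥ x)) := by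
    rw [dotProduct_mulVec, ← mulVec_transpose, dotProduct_comm]
    simp [transpose_mul, hΦ.eq, mulVec_mulVec, Matrix.mul_assoc]
  rw [h1, sym_form, h2, Amat_mul, add_mulVec, dotProduct_add, h3]
  ring

def TmatAux (L m p : ℕ) : Matrix (Fin p ⊕ Idx L m p) (Idx L m p ⊕ Idx L m p) ℝ :=
  Matrix.fromBlocks (JpM L m p) 0 0 1

theorem N_form {L m p : ℕ} (Pim : Matrix (Fin p ⊕ Idx L m p) (Fin p ⊕ Idx L m p) ℝ)
    (x y : Idx L m p → ℝ) :
    (Sum.elim x y) ⬝ᵥ ((TmatAux L m p)ᵀ * Pim * TmatAux L m p) *ᵥ (Sum.elim x y) =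
      (Sum.elim (JpM L m p *ᵥ x) y) ⬝ᵥ Pim *ᵥ (Sum.elim (JpM L m p *ᵥ x) y) := by
  rw [congr_form, TmatAux, fromBlocks_mulVec]
  simp

theorem forward_dir (L m p : ℕ)
    (Pim : Matrix (Fin p ⊕ Idx L m p) (Fin p ⊕ Idx L m p) ℝ)
    (hsym : Pim.IsSymm)
    (Φ : Matrix (Idx L m p) (Idx L m p) ℝ) (D : Matrix (Fin m) (Idx L m p) ℝ)
    (hΦ : Φ.PosDef)
    (hM : (Matrix.fromBlocks ((EmatPhi L m p Φ D)ᵀ + EmatPhi L m p Φ D) Φ Φ 0 -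
      (TmatAux L m p)ᵀ * Pim * TmatAux L m p).PosDef)
    (R : Matrix (Fin p) (Idx L m p) ℝ)
    (hR : ((stackIp R)ᵀ * Pim * stackIp R).PosSemidef) :
    ((AmatCR L m p (D * Φ⁻¹) R)ᵀ * Φ⁻¹ + Φ⁻¹ * AmatCR L m p (D * Φ⁻¹) R).PosDef := by
  have hΨs := PosDef_symm hΦ.inv
  have hdet : IsUnit Φ.det := (isUnit_iff_isUnit_det _).1 hΦ.isUnit
  have hinv : Φ * Φ⁻¹ = 1 := mul_nonsing_inv _ hdet
  have hinv' : Φ⁻¹ * Φ = 1 := nonsing_inv_mul _ hdet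
  rw [sigma_iff _ hsym] at hR
  refine posDef_of_form _ ?_ fun u hu => ?_
  · rw [IsSymm, transpose_add, transpose_mul, transpose_mul, transpose_transpose, hΨs.eq, add_comm]
  · obtain ⟨x, rfl⟩ : ∃ x, Φ *ᵥ x = u := ⟨Φ⁻¹ *ᵥ u, by rw [mulVec_mulVec, hinv, one_mulVec]⟩
    have hx : x ≠ 0 := by rintro rfl; simp at hu
    rw [lyap_form _ _ _ _ _ _ _ (PosDef_symm hΦ) hΨs hinv, Matrix.mul_assoc, hinv', Matrix.mul_one]
    have h1 := PosDef_form hM (Sum.elim x (Rᵀ *ᵥ (JpM L m p *ᵥ x))) (by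
      intro h
      apply hx
      ext i
      exact congrFun h (Sum.inl i))
    rw [sub_mulVec, dotProduct_sub, N_form, M_form _ _ (PosDef_symm hΦ)] at h1
    linarith [hR (JpM L m p *ᵥ x)]

theorem backward_dir (L m p : ℕ) (hL : 1 ≤ L) (hm : 1 ≤ m)
    (Pim : Matrix (Fin p ⊕ Idx L m p) (Fin p ⊕ Idx L m p) ℝ)
    (hsym : Pim.IsSymm)
    (hneg : (-Pim.toBlocks₂₂).PosDef)
    (Rs : Matrix (Fin p) (Idx L m p) ℝ)
    (hRs : ((stackIp Rs)ᵀ * Pim * stackIp Rs).PosSemidef)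
    (Ψ : Matrix (Idx L m p) (Idx L m p) ℝ) (C : Matrix (Fin m) (Idx L m p) ℝ)
    (hΨ : Ψ.PosDef)
    (h : ∀ R : Matrix (Fin p) (Idx L m p) ℝ,
      ((stackIp R)ᵀ * Pim * stackIp R).PosSemidef →
        ((AmatCR L m p C R)ᵀ * Ψ + Ψ * AmatCR L m p C R).PosDef) :
    ∃ (Φ : Matrix (Idx L m p) (Idx L m p) ℝ) (D : Matrix (Fin m) (Idx L m p) ℝ),
      Φ.PosDef ∧
        (Matrix.fromBlocks ((EmatPhi L m p Φ D)ᵀ + EmatPhi L m p Φ D) Φ Φ 0 -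
          (TmatAux L m p)ᵀ * Pim * TmatAux L m p).PosDef := by
  set N := (TmatAux L m p)ᵀ * Pim * TmatAux L m p with hN
  have hNs : N.IsSymm := by simp [hN, IsSymm, Matrix.mul_assoc, hsym.eq]
  have hdet : IsUnit Ψ.det := (isUnit_iff_isUnit_det _).1 hΨ.isUnit
  have hinv : Ψ⁻¹ * Ψ = 1 := nonsing_inv_mul _ hdet
  have hinv' : Ψ * Ψ⁻¹ = 1 := mul_nonsing_inv _ hdet
  set Φ := Ψ⁻¹ with hΦd
  have hΦ : Φ.PosDef := hΨ.inv
  have hΦs := PosDef_symm hΦ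
  set E := EmatPhi L m p Φ (C * Φ) with hE
  -- quadratic form of `Π` at `(0, y)`
  have hP0 : ∀ y : Idx L m p → ℝ, y ≠ 0 →
      (Sum.elim (0 : Fin p → ℝ) y) ⬝ᵥ Pim *ᵥ (Sum.elim 0 y) < 0 := by
    intro y hy
    have h1 := PosDef_form hneg y hy
    have h2 : (Sum.elim (0 : Fin p → ℝ) y) ⬝ᵥ Pim *ᵥ (Sum.elim 0 y) =
        y ⬝ᵥ Pim.toBlocks₂₂ *ᵥ y := by
      conv_lhs => rw [← Matrix.fromBlocks_toBlocks Pim]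
      rw [fromBlocks_mulVec, sumElim_dotProduct_sumElim]
      simp
    rw [neg_mulVec, dotProduct_neg] at h1
    rw [h2]
    linarith
  obtain ⟨α, hα⟩ := slemma_strict (Matrix.fromBlocks (Eᵀ + E) Φ Φ 0) N (by
    intro z hz hB
    obtain ⟨x, y, rfl⟩ : ∃ x y, z = Sum.elim x y := ⟨_, _, (Sum.elim_comp_inl_inr z).symm⟩
    rw [N_form] at hB
    have hx : x ≠ 0 := by
      rintro rfl
      have hy : y ≠ 0 := by
        rintro rfl
        apply hz
        ext i
        rcases i with i | i <;> rfl
      rw [mulVec_zero] at hB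
      linarith [hP0 y hy]
    obtain ⟨Z, hZ, hZv⟩ := extend_form Pim hsym hneg Rsᵀ ((sigma_iff _ hsym _).1 hRs)
      (JpM L m p *ᵥ x) y hB
    have h1 := PosDef_form (h Zᵀ ((sigma_iff _ hsym _).2 (by simpa using hZ))) (Φ *ᵥ x) (by
      intro h0
      apply hx
      have := congrArg (Ψ *ᵥ ·) h0
      simpa [mulVec_mulVec, hinv'] using this)
    rw [lyap_form _ _ _ _ _ _ _ hΦs (PosDef_symm hΨ) hinv, transpose_transpose, hZv] at h1
    rw [M_form _ _ hΦs]
    exact h1)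
  have hα0 : 0 < α := by
    have hy : (fun _ : Idx L m p => (1 : ℝ)) ≠ 0 := by
      intro h0
      have := congrFun h0 (⟨0, hL⟩, Sum.inl ⟨0, hm⟩)
      simp at this
    have h1 := hα (Sum.elim 0 (fun _ => 1)) (by
      intro h0
      apply hy
      ext i
      exact congrFun h0 (Sum.inr i))
    rw [N_form, M_form _ _ hΦs, mulVec_zero] at h1
    simp only [zero_dotProduct, mul_zero, add_zero] at h1
    have := hP0 _ hy
    by_contra hc
    nlinarith [mul_nonneg (neg_nonneg.2 (not_lt.1 hc)) (neg_nonneg.2 this.le)]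
  refine ⟨α⁻¹ • Φ, α⁻¹ • (C * Φ), hΦ.smul (inv_pos.2 hα0), ?_⟩
  rw [Emat_smul, ← hE]
  have hb : Matrix.fromBlocks ((α⁻¹ • E)ᵀ + α⁻¹ • E) (α⁻¹ • Φ) (α⁻¹ • Φ) 0 =
      α⁻¹ • Matrix.fromBlocks (Eᵀ + E) Φ Φ 0 := by
    simp [fromBlocks_smul]
  rw [hb]
  refine posDef_of_form _ ?_ fun z hz => ?_
  · refine IsSymm.sub (IsSymm.smul ?_ _) hNs
    rw [IsSymm, fromBlocks_transpose, hΦs.eq, transpose_add, transpose_transpose, add_comm,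
      transpose_zero]
  · rw [sub_mulVec, smul_mulVec, dotProduct_sub, dotProduct_smul, smul_eq_mul]
    have h1 := mul_lt_mul_of_pos_left (hα z hz) (inv_pos.2 hα0)
    rw [← mul_assoc, inv_mul_cancel₀ hα0.ne', one_mul] at h1
    linarith

/-- **Theorem 4.7 (matrix-level content).** Data informativity for quadratic
stabilization: with `Σ = {R : [I_p;Rᵀ]ᵀ Π [I_p;Rᵀ] ⪰ 0}` and `N = Tᵀ Π T`,
(i) existence of a common Lyapunov certificate `(Ψ, C)` for all `R ∈ Σ` is equivalent to
(ii) feasibility of the LMI, and a feasible `(Φ, D)` yields the stabilizing controller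
`C = D Φ⁻¹` with certificate `Ψ = Φ⁻¹`. -/
theorem stmt_9 (L m p : ℕ) (hL : 1 ≤ L) (hm : 1 ≤ m) (hp : 1 ≤ p)
    (Pim : Matrix (Fin p ⊕ Idx L m p) (Fin p ⊕ Idx L m p) ℝ)
    (hsym : Pim.IsSymm)
    (hneg : (-Pim.toBlocks₂₂).PosDef)
    (Rs : Matrix (Fin p) (Idx L m p) ℝ)
    (hRs : ((stackIp Rs)ᵀ * Pim * stackIp Rs).PosSemidef)
    (N : Matrix (Idx L m p ⊕ Idx L m p) (Idx L m p ⊕ Idx L m p) ℝ)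
    (hN : N =
      (Matrix.fromBlocks (JpM L m p) 0 0 (1 : Matrix (Idx L m p) (Idx L m p) ℝ))ᵀ *
        Pim * Matrix.fromBlocks (JpM L m p) 0 0 1) :
    ((∃ (Ψ : Matrix (Idx L m p) (Idx L m p) ℝ) (C : Matrix (Fin m) (Idx L m p) ℝ),
        Ψ.PosDef ∧
          ∀ R : Matrix (Fin p) (Idx L m p) ℝ,
            ((stackIp R)ᵀ * Pim * stackIp R).PosSemidef →
            ((AmatCR L m p C R)ᵀ * Ψ + Ψ * AmatCR L m p C R).PosDef) ↔
      (∃ (Φ : Matrix (Idx L m p) (Idx L m p) ℝ) (D : Matrix (Fin m) (Idx L m p) ℝ),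
        Φ.PosDef ∧
          (Matrix.fromBlocks ((EmatPhi L m p Φ D)ᵀ + EmatPhi L m p Φ D) Φ Φ 0 -
            N).PosDef)) ∧
      (∀ (Φ : Matrix (Idx L m p) (Idx L m p) ℝ) (D : Matrix (Fin m) (Idx L m p) ℝ),
        Φ.PosDef →
        (Matrix.fromBlocks ((EmatPhi L m p Φ D)ᵀ + EmatPhi L m p Φ D) Φ Φ 0 -
          N).PosDef →
        ∀ R : Matrix (Fin p) (Idx L m p) ℝ,
          ((stackIp R)ᵀ * Pim * stackIp R).PosSemidef →
          ((AmatCR L m p (D * Φ⁻¹) R)ᵀ * Φ⁻¹ +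
            Φ⁻¹ * AmatCR L m p (D * Φ⁻¹) R).PosDef) := by
  have hN2 : N = (TmatAux L m p)ᵀ * Pim * TmatAux L m p := hN
  subst hN2
  refine ⟨⟨?_, ?_⟩, ?_⟩
  · rintro ⟨Ψ, C, hΨ, h⟩
    exact backward_dir L m p hL hm Pim hsym hneg Rs hRs Ψ C hΨ h
  · rintro ⟨Φ, D, hΦ, h⟩
    exact ⟨Φ⁻¹, D * Φ⁻¹, hΦ.inv, forward_dir L m p Pim hsym Φ D hΦ h⟩
  · intro Φ D hΦ h
    exact forward_dir L m p Pim hsym Φ D hΦ h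
end
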